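/- $\int_0^{\pi/3}\theta\log^2(2\sin(\theta/2))\,d\theta = \frac{17}{6480}\pi^4$. -/

import Mathlib

open Real

open MeasureTheory Set Filter Topology

theorem hasSum_one_div_succ_sq : HasSum (fun n : ℕ ↦ 1 / ((n : ℝ) + 1) ^ 2) (π ^ 2 / 6) := by
  simpa using (hasSum_nat_add_iff' 1).2 hasSum_zeta_two

theorem hasSum_one_div_succ_pow_four :
    HasSum (fun n : ℕ ↦ 1 / ((n : ℝ) + 1) ^ 4) (π ^ 4 / 90) := by
  simpa using (hasSum_nat_add_iff' 1).2 hasSum_zeta_four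

/-- A double series split into its diagonal and its two off-diagonal parts. -/
theorem hasSum_prod_of_diag_of_offDiag {s : ℕ × ℕ → ℝ} {a b c : ℝ}
    (hdiag : HasSum (fun n ↦ s (n, n)) a)
    (hlt : HasSum (fun p : ℕ × ℕ ↦ s (p.1, p.1 + p.2 + 1)) b)
    (hgt : HasSum (fun p : ℕ × ℕ ↦ s (p.1 + p.2 + 1, p.1)) c) :
    HasSum s (a + b + c) := by
  have hdiag' : HasSum (fun p : ℕ × ℕ ↦ if p.1 = p.2 then s p else 0) a := by
    have hinj : Function.Injective (fun n : ℕ ↦ (n, n)) := fun a b h ↦ (Prod.ext_iff.1 h).1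
    rw [← hinj.hasSum_iff]
    · simpa [Function.comp_def] using hdiag
    · rintro ⟨m, n⟩ h
      exact if_neg fun e ↦ h ⟨m, Prod.ext rfl e⟩
  have hlt' : HasSum (fun p : ℕ × ℕ ↦ if p.1 < p.2 then s p else 0) b := by
    have hinj : Function.Injective (fun p : ℕ × ℕ ↦ (p.1, p.1 + p.2 + 1)) := by
      rintro ⟨a, b⟩ ⟨c, d⟩ h
      simp only [Prod.mk.injEq] at h ⊢
      omega
    rw [← hinj.hasSum_iff]
    · simpa [Function.comp_def, Nat.lt_succ_iff, add_assoc] using hlt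
    · rintro ⟨m, n⟩ h
      exact if_neg fun e : m < n ↦ h ⟨(m, n - m - 1), Prod.ext rfl (by dsimp only; omega)⟩
  have hgt' : HasSum (fun p : ℕ × ℕ ↦ if p.2 < p.1 then s p else 0) c := by
    have hinj : Function.Injective (fun p : ℕ × ℕ ↦ (p.1 + p.2 + 1, p.1)) := by
      rintro ⟨a, b⟩ ⟨c, d⟩ h
      simp only [Prod.mk.injEq] at h ⊢
      omega
    rw [← hinj.hasSum_iff]
    · simpa [Function.comp_def, Nat.lt_succ_iff, add_assoc] using hgt
    · rintro ⟨m, n⟩ h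
      exact if_neg fun e : n < m ↦ h ⟨(n, m - n - 1), Prod.ext (by dsimp only; omega) rfl⟩
  convert (hdiag'.add hlt').add hgt' using 2 with p
  rcases lt_trichotomy p.1 p.2 with h | h | h
  · simp [h, h.ne, h.not_gt]
  · simp [h]
  · simp [h, h.ne', h.not_gt]

/-- The shuffle and stuffle relations for `ζ(2)²` evaluate the Tornheim sum of weight four. -/
theorem hasSum_tornheim :
    HasSum (fun p : ℕ × ℕ ↦
      1 / (((p.1 : ℝ) + 1) * (p.2 + 1) * (p.1 + p.2 + 2) ^ 2)) (π ^ 4 / 180) := by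
  have hsummable : Summable fun p : ℕ × ℕ ↦
      1 / ((p.1 : ℝ) + 1) ^ 2 * (1 / ((p.2 : ℝ) + 1) ^ 2) :=
    hasSum_one_div_succ_sq.summable.mul_of_nonneg hasSum_one_div_succ_sq.summable
      (fun n ↦ by positivity) (fun n ↦ by positivity)
  have hsum := hasSum_one_div_succ_sq.mul hasSum_one_div_succ_sq hsummable
  obtain ⟨A, hA⟩ : Summable fun p : ℕ × ℕ ↦
      1 / ((p.1 : ℝ) + 1) ^ 2 * (1 / ((p.1 : ℝ) + p.2 + 2) ^ 2) := by
    refine Summable.of_nonneg_of_le (fun p ↦ by positivity) (fun p ↦ ?_) hsummable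
    gcongr
    · linarith [(Nat.cast_nonneg p.1 : (0 : ℝ) ≤ p.1)]
    · norm_num
  have hswap : HasSum (fun p : ℕ × ℕ ↦
      1 / ((p.2 : ℝ) + 1) ^ 2 * (1 / ((p.2 : ℝ) + p.1 + 2) ^ 2)) A :=
    (Equiv.prodComm ℕ ℕ).hasSum_iff.2 hA
  have hcast : ∀ m n : ℕ, ((m + n + 1 : ℕ) : ℝ) + 1 = m + n + 2 := fun m n ↦ by
    push_cast
    ring
  have htotal := hasSum_prod_of_diag_of_offDiag
    (s := fun p ↦ 1 / ((p.1 : ℝ) + 1) ^ 2 * (1 / ((p.2 : ℝ) + 1) ^ 2))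
    (by simpa only [one_div_mul_one_div, ← pow_add] using hasSum_one_div_succ_pow_four)
    (by simpa only [hcast] using hA)
    (by simpa only [hcast, mul_comm] using hA)
  have hval := hsum.unique htotal
  have hshuffle := ((hsum.sub hA).sub hswap).mul_left (1 / 2)
  have hA_eq : 1 / 2 * (π ^ 2 / 6 * (π ^ 2 / 6) - A - A) = π ^ 4 / 180 := by linarith
  rw [hA_eq] at hshuffle
  refine hshuffle.congr_fun fun p ↦ ?_
  field_simp
  ring

theorem continuous_pow_succ_mul_log (k : ℕ) : Continuous fun x : ℝ ↦ x ^ (k + 1) * log x := by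
  simp_rw [pow_succ, mul_assoc]
  exact (continuous_pow k).mul continuous_mul_log

theorem integral_pow_succ_mul_log (k : ℕ) :
    ∫ x in (0 : ℝ)..1, x ^ (k + 1) * log x = -(1 / ((k : ℝ) + 2) ^ 2) := by
  have hcont := continuous_pow_succ_mul_log k
  have hk : (k : ℝ) + 2 ≠ 0 := by positivity
  have key := intervalIntegral.integral_eq_sub_of_hasDerivAt_of_le (a := 0) (b := 1)
    (f := fun x : ℝ ↦ x * (x ^ (k + 1) * log x) / (k + 2) - x ^ (k + 2) / (k + 2) ^ 2)
    (f' := fun x ↦ x ^ (k + 1) * log x) zero_le_one (by fun_prop) ?_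
    (hcont.intervalIntegrable _ _)
  · rw [key]
    simp
  · intro x hx
    have hx0 : x ≠ 0 := hx.1.ne'
    have h := (((hasDerivAt_id x).mul ((hasDerivAt_pow (k + 1) x).mul
      (hasDerivAt_log hx0))).div_const ((k : ℝ) + 2)).sub
      ((hasDerivAt_pow (k + 2) x).div_const (((k : ℝ) + 2) ^ 2))
    refine (h.congr_deriv ?_ :)
    simp only [id, Pi.mul_apply, Nat.add_sub_cancel, show k + 2 - 1 = k + 1 by omega]
    push_cast
    field_simp
    ring

theorem integral_log_mul_log_one_sub_sq_div :
    ∫ x in (0 : ℝ)..1, log x * log (1 - x) ^ 2 / x = -(π ^ 4 / 180) := by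
  set F : ℕ × ℕ → ℝ → ℝ := fun p x ↦
    1 / (((p.1 : ℝ) + 1) * (p.2 + 1)) * (x ^ (p.1 + p.2 + 1) * log x) with hF
  have hcont : ∀ p, Continuous (F p) := fun p ↦
    continuous_const.mul (continuous_pow_succ_mul_log (p.1 + p.2))
  have hint : ∀ p, ∫ x in Ioc (0 : ℝ) 1, F p x =
      -(1 / (((p.1 : ℝ) + 1) * (p.2 + 1) * (p.1 + p.2 + 2) ^ 2)) := fun p ↦ by
    rw [← intervalIntegral.integral_of_le zero_le_one, intervalIntegral.integral_const_mul,
      integral_pow_succ_mul_log]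
    push_cast
    field_simp
  have hnorm : ∀ p, ∫ x in Ioc (0 : ℝ) 1, ‖F p x‖ =
      1 / (((p.1 : ℝ) + 1) * (p.2 + 1) * (p.1 + p.2 + 2) ^ 2) := fun p ↦ by
    rw [← neg_eq_iff_eq_neg.2 (hint p), ← integral_neg]
    refine setIntegral_congr_fun measurableSet_Ioc fun x hx ↦ ?_
    have hlog := log_nonpos hx.1.le hx.2
    rw [Real.norm_eq_abs, abs_of_nonpos]
    exact mul_nonpos_of_nonneg_of_nonpos (by positivity)
      (mul_nonpos_of_nonneg_of_nonpos (pow_nonneg hx.1.le _) hlog)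
  have hsum := hasSum_integral_of_summable_integral_norm (μ := volume.restrict (Ioc (0 : ℝ) 1))
    (F := F) (fun p ↦ (hcont p).integrableOn_Ioc)
    (by simpa only [hnorm] using hasSum_tornheim.summable)
  simp only [hint] at hsum
  rw [intervalIntegral.integral_of_le zero_le_one, hasSum_tornheim.neg.unique hsum,
    integral_Ioc_eq_integral_Ioo, integral_Ioc_eq_integral_Ioo]
  refine setIntegral_congr_fun measurableSet_Ioo fun x hx ↦ (HasSum.tsum_eq ?_).symm
  have hlog := hasSum_pow_div_log_of_abs_lt_one (abs_lt.2 ⟨by linarith [hx.1], hx.2⟩)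
  have hnonneg : ∀ n : ℕ, 0 ≤ x ^ (n + 1) / ((n : ℝ) + 1) := fun n ↦ by
    have := hx.1
    positivity
  have hprod := (hlog.mul hlog
    (hlog.summable.mul_of_nonneg hlog.summable hnonneg hnonneg)).mul_left (log x / x)
  have hx0 : x ≠ 0 := hx.1.ne'
  have hval : log x / x * (-log (1 - x) * -log (1 - x)) = log x * log (1 - x) ^ 2 / x := by ring
  rw [hval] at hprod
  refine hprod.congr_fun fun p ↦ ?_
  simp only [hF]
  field_simp
  ring

theorem mem_slitPlane_of_sq_lt {z : ℂ} (hz : z.re ^ 2 + z.im ^ 2 < z.re + z.im) :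
    z ∈ Complex.slitPlane ∧ 1 - z ∈ Complex.slitPlane := by
  simp only [Complex.mem_slitPlane_iff, Complex.sub_re, Complex.one_re, Complex.sub_im,
    Complex.one_im]
  by_cases him : z.im = 0
  · rw [him] at hz
    exact ⟨.inl (by nlinarith), .inl (by nlinarith)⟩
  · exact ⟨.inr him, .inr (by simpa using him)⟩

theorem mem_ball_iff_sq_lt {z : ℂ} :
    z ∈ Metric.ball (⟨1 / 2, 1 / 2⟩ : ℂ) (√(1 / 2)) ↔
      z.re ^ 2 + z.im ^ 2 < z.re + z.im := by
  rw [mem_ball_iff_norm, Real.lt_sqrt (norm_nonneg _), ← Complex.normSq_eq_norm_sq,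
    Complex.normSq_apply]
  simp only [Complex.sub_re, Complex.sub_im]
  constructor <;> intro h <;> nlinarith

/-- `F` is a primitive of `log z * log² (1 - z) / z` on the open disc whose boundary circle
passes through `0`, `1` and `I`. -/
def IsLogPrimitive (F : ℂ → ℂ) : Prop :=
  ∀ z : ℂ, z.re ^ 2 + z.im ^ 2 < z.re + z.im →
    HasDerivAt F (Complex.log z * Complex.log (1 - z) ^ 2 / z) z

theorem exists_isLogPrimitive :
    ∃ F : ℂ → ℂ, IsLogPrimitive F := by
  have hdiff : DifferentiableOn ℂ (fun z ↦ Complex.log z * Complex.log (1 - z) ^ 2 / z)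
      (Metric.ball (⟨1 / 2, 1 / 2⟩ : ℂ) (√(1 / 2))) := by
    intro z hz
    obtain ⟨h₁, h₂⟩ := mem_slitPlane_of_sq_lt (mem_ball_iff_sq_lt.1 hz)
    have h₀ := Complex.slitPlane_ne_zero h₁
    exact ((differentiableAt_id.clog h₁).mul
      (((differentiableAt_const _).sub differentiableAt_id).clog h₂ |>.pow 2)
      |>.div differentiableAt_id h₀).differentiableWithinAt
  obtain ⟨F, hF⟩ := hdiff.isExactOn_ball
  exact ⟨F, fun z hz ↦ hF z (mem_ball_iff_sq_lt.2 hz)⟩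

theorem mul_log_sq_le {x : ℝ} (h₀ : 0 < x) (h₁ : x ≤ 1) : x * log x ^ 2 ≤ 4 := by
  have h := abs_log_mul_self_rpow_lt x (1 / 2) h₀ h₁ (by norm_num)
  rw [← Real.sqrt_eq_rpow] at h
  have h' := sq_lt_sq' (by linarith [(abs_lt.1 h).1]) (abs_lt.1 h).2
  rw [mul_pow, Real.sq_sqrt h₀.le] at h'
  linarith

theorem norm_log_mul_log_one_sub_sq_div_le {z : ℂ} (hz : ‖z - 1‖ ≤ 1 / 2) :
    ‖Complex.log z * Complex.log (1 - z) ^ 2 / z‖ ≤ 100 := by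
  rcases eq_or_ne z 1 with rfl | hne
  · simp
  have hpos : 0 < ‖z - 1‖ := norm_pos_iff.2 (sub_ne_zero.2 hne)
  have hlog : ‖Complex.log z‖ ≤ 3 / 2 * ‖z - 1‖ := by
    simpa using Complex.norm_log_one_add_half_le_self hz
  have hz_norm : 1 / 2 ≤ ‖z‖ := by
    have := norm_sub_norm_le (1 : ℂ) z
    rw [norm_one, norm_sub_rev] at this
    linarith
  have hlog' : ‖Complex.log (1 - z)‖ ^ 2 ≤ log ‖z - 1‖ ^ 2 + π ^ 2 := by
    rw [← Complex.normSq_eq_norm_sq, Complex.normSq_apply, Complex.log_re, Complex.log_im,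
      norm_sub_rev]
    have := sq_le_sq' (Complex.neg_pi_lt_arg (1 - z)).le (Complex.arg_le_pi (1 - z))
    nlinarith
  have hmul := mul_log_sq_le hpos (by linarith)
  have hpi : π ^ 2 ≤ 16 := by nlinarith [pi_le_four, pi_pos]
  rw [norm_div, norm_mul, norm_pow, div_le_iff₀ (by linarith)]
  calc ‖Complex.log z‖ * ‖Complex.log (1 - z)‖ ^ 2
      ≤ 3 / 2 * ‖z - 1‖ * (log ‖z - 1‖ ^ 2 + π ^ 2) := by gcongr
    _ ≤ 100 * ‖z‖ := by nlinarith

theorem one_sub_exp_eq (θ : ℝ) :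
    1 - Complex.exp (θ * Complex.I) =
      (2 * sin (θ / 2) : ℝ) * Complex.exp (((θ - π) / 2 : ℝ) * Complex.I) := by
  have h₁ : cos ((θ - π) / 2) = sin (θ / 2) := by
    rw [show (θ - π) / 2 = θ / 2 - π / 2 by ring, cos_sub_pi_div_two]
  have h₂ : sin ((θ - π) / 2) = -cos (θ / 2) := by
    rw [show (θ - π) / 2 = θ / 2 - π / 2 by ring, sin_sub_pi_div_two]
  have h₃ : cos θ = 1 - 2 * sin (θ / 2) ^ 2 := by
    rw [← mul_div_cancel₀ θ (two_ne_zero), cos_two_mul, cos_sq']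
    rw [mul_div_cancel₀ θ (two_ne_zero)]
    ring
  have h₄ : sin θ = 2 * sin (θ / 2) * cos (θ / 2) := by
    rw [← sin_two_mul, mul_div_cancel₀ θ (two_ne_zero)]
  apply Complex.ext
  · rw [Complex.re_ofReal_mul, Complex.exp_ofReal_mul_I_re, Complex.sub_re,
      Complex.exp_ofReal_mul_I_re, h₁, h₃, Complex.one_re]
    ring
  · rw [Complex.im_ofReal_mul, Complex.exp_ofReal_mul_I_im, Complex.sub_im,
      Complex.exp_ofReal_mul_I_im, h₂, h₄, Complex.one_im]
    ring

theorem log_exp_mul_I {θ : ℝ} (h₀ : 0 < θ) (h₁ : θ < π) :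
    Complex.log (Complex.exp (θ * Complex.I)) = θ * Complex.I :=
  Complex.log_exp (by simp; linarith) (by simp; linarith)

theorem log_one_sub_exp_mul_I {θ : ℝ} (h₀ : 0 < θ) (h₁ : θ < π) :
    Complex.log (1 - Complex.exp (θ * Complex.I)) =
      log (2 * sin (θ / 2)) + ((θ - π) / 2 : ℝ) * Complex.I := by
  have hsin : 0 < sin (θ / 2) := sin_pos_of_pos_of_lt_pi (by linarith) (by linarith)
  rw [one_sub_exp_eq, Complex.log_ofReal_mul (by positivity) (Complex.exp_ne_zero _),
    Complex.log_exp]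
  · simp only [Complex.mul_I_im, Complex.ofReal_re]
    linarith
  · simp only [Complex.mul_I_im, Complex.ofReal_re]
    linarith

theorem exp_mul_I_sq_lt {θ : ℝ} (h₀ : 0 < θ) (h₁ : θ < π / 2) :
    (Complex.exp (θ * Complex.I)).re ^ 2 + (Complex.exp (θ * Complex.I)).im ^ 2 <
      (Complex.exp (θ * Complex.I)).re + (Complex.exp (θ * Complex.I)).im := by
  rw [Complex.exp_ofReal_mul_I_re, Complex.exp_ofReal_mul_I_im, cos_sq_add_sin_sq]
  have hs := sin_pos_of_pos_of_lt_pi h₀ (by linarith)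
  have hc : 0 < cos θ := cos_pos_of_mem_Ioo ⟨by linarith, h₁⟩
  nlinarith [sin_sq_add_cos_sq θ, mul_pos hs hc]

section Primitive

variable {F : ℂ → ℂ}

theorem hasDerivAt_re_primitive_ofReal
    (hF : IsLogPrimitive F)
    {x : ℝ} (hx : x ∈ Ioo (0 : ℝ) 1) :
    HasDerivAt (fun x : ℝ ↦ (F x).re) (log x * log (1 - x) ^ 2 / x) x := by
  have h := (hF x (by simp; nlinarith [hx.1, hx.2])).real_of_complex
  refine h.congr_deriv ?_
  rw [← Complex.ofReal_log hx.1.le, ← Complex.ofReal_one, ← Complex.ofReal_sub,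
    ← Complex.ofReal_log (by linarith [hx.2])]
  norm_cast

theorem hasDerivAt_re_primitive_exp
    (hF : IsLogPrimitive F)
    {θ : ℝ} (hθ : θ ∈ Ioo (0 : ℝ) (π / 2)) :
    HasDerivAt (fun θ : ℝ ↦ (F (Complex.exp (θ * Complex.I))).re)
      (θ * (θ - π) ^ 2 / 4 - θ * log (2 * sin (θ / 2)) ^ 2) θ := by
  have hexp : HasDerivAt (fun w : ℂ ↦ Complex.exp (w * Complex.I))
      (Complex.exp (θ * Complex.I) * (1 * Complex.I)) θ :=
    ((hasDerivAt_id (θ : ℂ)).mul_const Complex.I).cexp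
  have h := ((hF _ (exp_mul_I_sq_lt hθ.1 hθ.2)).comp (θ : ℂ) hexp).real_of_complex
  refine h.congr_deriv ?_
  have hπ : θ < π := by linarith [hθ.2, pi_pos]
  rw [log_exp_mul_I hθ.1 hπ, log_one_sub_exp_mul_I hθ.1 hπ]
  have hne := Complex.exp_ne_zero (θ * Complex.I)
  field_simp
  simp [pow_two]
  ring

theorem hasDerivAt_two_mul_primitive_sub
    (hF : IsLogPrimitive F)
    {z : ℂ} (hz : z.re ^ 2 + z.im ^ 2 < z.re + z.im) :
    HasDerivAt (fun z ↦ 2 * F z - (Complex.log z * Complex.log (1 - z)) ^ 2 / 2)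
      (Complex.log z * Complex.log (1 - z) *
        (Complex.log (1 - z) / z + Complex.log z / (1 - z))) z := by
  obtain ⟨h₁, h₂⟩ := mem_slitPlane_of_sq_lt hz
  have h₁' := Complex.slitPlane_ne_zero h₁
  have h₂' := Complex.slitPlane_ne_zero h₂
  have hlog := Complex.hasDerivAt_log h₁
  have hlog' : HasDerivAt (fun w ↦ Complex.log (1 - w)) (-1 / (1 - z)) z :=
    ((hasDerivAt_id z).const_sub 1).clog h₂
  refine (((hF z hz).const_mul 2).sub (((hlog.mul hlog').pow 2).div_const 2)).congr_deriv ?_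
  simp
  field_simp
  ring

/-- The real part of `2 F - log² z log² (1 - z) / 2` does not change along `Re z = 1 / 2`. -/
theorem re_primitive_exp_pi_div_three
    (hF : IsLogPrimitive F) :
    2 * (F (Complex.exp ((π / 3 : ℝ) * Complex.I))).re - π ^ 4 / 162 =
      2 * (F (1 / 2 : ℝ)).re - log 2 ^ 4 / 2 := by
  set H : ℂ → ℂ := fun z ↦ 2 * F z - (Complex.log z * Complex.log (1 - z)) ^ 2 / 2 with hH
  have hderiv : ∀ y ∈ Icc (0 : ℝ) (√3 / 2),
      HasDerivAt (fun y : ℝ ↦ (H ((1 / 2 : ℝ) + y * Complex.I)).re) 0 y := by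
    intro y hy
    have h3 : √3 ≤ 2 := by rw [Real.sqrt_le_left (by norm_num)]; norm_num
    have hmem : ((1 / 2 : ℝ) + y * Complex.I : ℂ).re ^ 2 + ((1 / 2 : ℝ) + y * Complex.I : ℂ).im ^ 2
        < ((1 / 2 : ℝ) + y * Complex.I : ℂ).re + ((1 / 2 : ℝ) + y * Complex.I : ℂ).im := by
      simp
      nlinarith [hy.1, hy.2]
    have hline : HasDerivAt (fun w : ℂ ↦ ((1 / 2 : ℝ) : ℂ) + w * Complex.I) (1 * Complex.I) y :=
      ((hasDerivAt_id (y : ℂ)).mul_const Complex.I).const_add _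
    refine ((hasDerivAt_two_mul_primitive_sub hF hmem).comp (y : ℂ)
      hline).real_of_complex.congr_deriv ?_
    set z : ℂ := (1 / 2 : ℝ) + y * Complex.I with hz
    have hconj : 1 - z = (starRingEnd ℂ) z := by
      apply Complex.ext <;> simp [hz]
      norm_num
    have hlog : Complex.log (1 - z) = (starRingEnd ℂ) (Complex.log z) := by
      rw [hconj, Complex.log_conj]
      exact Complex.slitPlane_arg_ne_pi (mem_slitPlane_of_sq_lt hmem).1
    have him : (Complex.log z * Complex.log (1 - z) *
        (Complex.log (1 - z) / z + Complex.log z / (1 - z))).im = 0 := by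
      rw [← Complex.conj_eq_iff_im]
      simp only [hlog, map_mul, map_sub, map_one, map_add, map_div₀, Complex.conj_conj, ← hconj, sub_sub_cancel]
      ring
    rw [one_mul, Complex.mul_I_re, him, neg_zero]
  have hconst := constant_of_has_deriv_right_zero
    (fun y hy ↦ (hderiv y hy).continuousAt.continuousWithinAt)
    (fun y hy ↦ (hderiv y ⟨hy.1, hy.2.le⟩).hasDerivWithinAt) (√3 / 2)
    (right_mem_Icc.2 (by positivity))
  have hend : ((1 / 2 : ℝ) + (√3 / 2 : ℝ) * Complex.I : ℂ) =
      Complex.exp ((π / 3 : ℝ) * Complex.I) := by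
    apply Complex.ext
    · rw [Complex.exp_ofReal_mul_I_re, cos_pi_div_three]
      simp
    · rw [Complex.exp_ofReal_mul_I_im, sin_pi_div_three]
      simp
  have hlog_end : (Complex.log (Complex.exp ((π / 3 : ℝ) * Complex.I)) *
      Complex.log (1 - Complex.exp ((π / 3 : ℝ) * Complex.I))) ^ 2 / 2 =
        (π ^ 4 / 162 : ℝ) := by
    rw [log_exp_mul_I (by positivity) (by linarith [pi_pos]),
      log_one_sub_exp_mul_I (by positivity) (by linarith [pi_pos]),
      show π / 3 / 2 = π / 6 by ring, sin_pi_div_six, show (2 : ℝ) * (1 / 2) = 1 by norm_num,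
      log_one, show (π / 3 - π) / 2 = -(π / 3) by ring]
    push_cast
    linear_combination (π : ℂ) ^ 4 / 162 * (Complex.I ^ 2 - 1) * Complex.I_sq
  have hlog_start : (Complex.log ((1 / 2 : ℝ) : ℂ) *
      Complex.log (1 - ((1 / 2 : ℝ) : ℂ))) ^ 2 / 2 = (log 2 ^ 4 / 2 : ℝ) := by
    rw [← Complex.ofReal_one, ← Complex.ofReal_sub, show (1 : ℝ) - 1 / 2 = 1 / 2 by norm_num,
      ← Complex.ofReal_log (by norm_num), one_div, log_inv]
    push_cast
    ring
  rw [hend, Complex.ofReal_zero, zero_mul, add_zero] at hconst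
  simp only [hH] at hconst
  rw [hlog_end, hlog_start] at hconst
  simpa [-Complex.ofReal_div, -one_div] using hconst

/-- The reflection `x ↦ 1 - x` on the real segment. -/
theorem re_primitive_add_re_primitive_one_sub
    (hF : IsLogPrimitive F)
    {x : ℝ} (hx : x ∈ Ioo (0 : ℝ) 1) :
    2 * (F x).re + 2 * (F (1 - x : ℝ)).re - (log x * log (1 - x)) ^ 2 =
      4 * (F (1 / 2 : ℝ)).re - log 2 ^ 4 := by
  set K : ℝ → ℝ := fun x ↦ 2 * (F x).re + 2 * (F (1 - x : ℝ)).re - (log x * log (1 - x)) ^ 2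
    with hK
  have hderiv : ∀ x ∈ Ioo (0 : ℝ) 1, HasDerivAt K 0 x := by
    intro x hx
    have hx₀ : x ≠ 0 := hx.1.ne'
    have hx₁ : 1 - x ≠ 0 := by linarith [hx.2]
    have hsub : HasDerivAt (fun x : ℝ ↦ 1 - x) (-1) x := (hasDerivAt_id x).const_sub 1
    have hrefl := HasDerivAt.comp (h₂ := fun x : ℝ ↦ (F x).re) x
      (hasDerivAt_re_primitive_ofReal hF (x := 1 - x) ⟨by linarith [hx.2], by linarith [hx.1]⟩)
      hsub
    refine ((((hasDerivAt_re_primitive_ofReal hF hx).const_mul 2).add (hrefl.const_mul 2)).sub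
      (((hasDerivAt_log hx₀).mul (hsub.log hx₁)).pow 2)).congr_deriv ?_
    simp
    field_simp
    ring
  have hconst := isOpen_Ioo.is_const_of_deriv_eq_zero isPreconnected_Ioo
    (fun y hy ↦ (hderiv y hy).differentiableAt.differentiableWithinAt)
    (fun y hy ↦ (hderiv y hy).deriv) hx (y := 1 / 2) (by norm_num)
  change K x = _
  rw [hconst, hK]
  dsimp only
  rw [show (1 : ℝ) - 1 / 2 = 1 / 2 by norm_num, one_div, log_inv]
  ring

theorem tendsto_log_mul_log_one_sub_one :
    Tendsto (fun x ↦ log x * log (1 - x)) (𝓝[<] 1) (𝓝 0) := by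
  have hcont : Tendsto (fun x : ℝ ↦ |(1 - x) * log (1 - x)| / x) (𝓝[<] 1) (𝓝 0) := by
    have h : ContinuousAt (fun x : ℝ ↦ |(1 - x) * log (1 - x)| / x) 1 :=
      ((continuous_mul_log.comp (continuous_const.sub continuous_id)).abs.continuousAt).div
        continuousAt_id one_ne_zero
    simpa [ContinuousAt] using h.tendsto.mono_left nhdsWithin_le_nhds
  refine squeeze_zero_norm' ?_ hcont
  filter_upwards [Ioo_mem_nhdsLT (zero_lt_one (α := ℝ))] with x hx
  have hlog : |log x| ≤ (1 - x) / x := by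
    rw [abs_of_nonpos (log_nonpos hx.1.le hx.2.le), ← log_inv]
    refine (log_le_sub_one_of_pos (inv_pos.2 hx.1)).trans_eq ?_
    have := hx.1.ne'
    field_simp
  rw [norm_mul, Real.norm_eq_abs, Real.norm_eq_abs, abs_mul, abs_of_pos (sub_pos.2 hx.2),
    mul_div_right_comm]
  gcongr

/-- The boundary value of the primitive at `1`, approached along the real segment. -/
theorem tendsto_re_primitive_ofReal (hF : IsLogPrimitive F) :
    Tendsto (fun x : ℝ ↦ (F x).re) (𝓝[<] 1)
      (𝓝 ((F (1 / 2 : ℝ)).re - π ^ 4 / 360 - log 2 ^ 4 / 4)) := by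
  have hint : IntervalIntegrable (fun x ↦ log x * log (1 - x) ^ 2 / x) volume 0 1 := by
    by_contra h
    have h₀ := intervalIntegral.integral_undef h
    rw [integral_log_mul_log_one_sub_sq_div] at h₀
    have := pow_pos pi_pos 4
    linarith
  set P : ℝ → ℝ := fun x ↦ ∫ t in (0 : ℝ)..x, log t * log (1 - t) ^ 2 / t with hP
  have hPcont : ContinuousOn P (Icc 0 1) := by
    have := intervalIntegral.continuousOn_primitive_interval' hint left_mem_uIcc
    rwa [uIcc_of_le zero_le_one] at this
  have hsub : ∀ x ∈ Ioo (0 : ℝ) 1, ∀ y ∈ Ioo (0 : ℝ) 1,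
      IntervalIntegrable (fun x ↦ log x * log (1 - x) ^ 2 / x) volume x y := fun x hx y hy ↦
    hint.mono_set (by
      rw [uIcc_of_le (zero_le_one (α := ℝ))]
      exact (ordConnected_Icc.uIcc_subset ⟨hx.1.le, hx.2.le⟩ ⟨hy.1.le, hy.2.le⟩))
  have hhalf : (1 / 2 : ℝ) ∈ Ioo (0 : ℝ) 1 := by norm_num
  have hF_eq : ∀ x ∈ Ioo (0 : ℝ) 1, (F x).re = (F (1 / 2 : ℝ)).re - P (1 / 2) + P x := by
    intro x hx
    have h := intervalIntegral.integral_eq_sub_of_hasDerivAt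
      (fun y hy ↦ hasDerivAt_re_primitive_ofReal hF (ordConnected_Ioo.uIcc_subset hhalf hx hy))
      (hsub _ hhalf _ hx)
    have h' := intervalIntegral.integral_interval_sub_left (a := 0) (b := x) (c := 1 / 2)
      (hint.mono_set (by
        rw [uIcc_of_le (zero_le_one (α := ℝ)), uIcc_of_le hx.1.le]
        exact Icc_subset_Icc_right hx.2.le))
      (hint.mono_set (by
        rw [uIcc_of_le (zero_le_one (α := ℝ)), uIcc_of_le hhalf.1.le]
        exact Icc_subset_Icc_right hhalf.2.le))
    simp only [hP]
    linarith
  have hP1 : P 1 = -(π ^ 4 / 180) := integral_log_mul_log_one_sub_sq_div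
  have hP0 : P 0 = 0 := intervalIntegral.integral_same
  have hlim₁ : Tendsto (fun x : ℝ ↦ (F x).re) (𝓝[<] 1)
      (𝓝 ((F (1 / 2 : ℝ)).re - P (1 / 2) + P 1)) := by
    have h : Tendsto P (𝓝[<] 1) (𝓝 (P 1)) := by
      rw [← nhdsWithin_Ioo_eq_nhdsLT (zero_lt_one (α := ℝ))]
      exact (hPcont 1 (right_mem_Icc.2 zero_le_one)).mono Ioo_subset_Icc_self
    refine (h.const_add _).congr' ?_
    filter_upwards [Ioo_mem_nhdsLT (zero_lt_one (α := ℝ))] with x hx using (hF_eq x hx).symm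
  have hlim₀ : Tendsto (fun x : ℝ ↦ (F x).re) (𝓝[>] 0)
      (𝓝 ((F (1 / 2 : ℝ)).re - P (1 / 2) + P 0)) := by
    have h : Tendsto P (𝓝[>] 0) (𝓝 (P 0)) := by
      rw [← nhdsWithin_Ioo_eq_nhdsGT (zero_lt_one (α := ℝ))]
      exact (hPcont 0 (left_mem_Icc.2 zero_le_one)).mono Ioo_subset_Icc_self
    refine (h.const_add _).congr' ?_
    filter_upwards [Ioo_mem_nhdsGT (zero_lt_one (α := ℝ))] with x hx using (hF_eq x hx).symm
  have hrefl : Tendsto (fun x : ℝ ↦ 1 - x) (𝓝[<] 1) (𝓝[>] 0) := by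
    refine tendsto_nhdsWithin_iff.2 ⟨?_, ?_⟩
    · have h : ContinuousAt (fun x : ℝ ↦ 1 - x) 1 := by fun_prop
      simpa [ContinuousAt] using h.tendsto.mono_left nhdsWithin_le_nhds
    · filter_upwards [self_mem_nhdsWithin] with x hx
      exact mem_Ioi.2 (sub_pos.2 (mem_Iio.1 hx))
  have hsum := ((hlim₁.const_mul 2).add ((hlim₀.comp hrefl).const_mul 2)).sub
    (tendsto_log_mul_log_one_sub_one.pow 2)
  have hconst : Tendsto (fun _ : ℝ ↦ 4 * (F (1 / 2 : ℝ)).re - log 2 ^ 4) (𝓝[<] 1)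
      (𝓝 (4 * (F (1 / 2 : ℝ)).re - log 2 ^ 4)) := tendsto_const_nhds
  have heq := tendsto_nhds_unique (hconst.congr' (by
    filter_upwards [Ioo_mem_nhdsLT (zero_lt_one (α := ℝ))] with x hx
    exact (re_primitive_add_re_primitive_one_sub hF hx).symm)) hsum
  convert hlim₁ using 2
  rw [hP1, hP0] at *
  linarith

/-- The boundary value of the primitive at `1`, approached along the unit circle. -/
theorem tendsto_re_primitive_exp (hF : IsLogPrimitive F) :
    Tendsto (fun θ : ℝ ↦ (F (Complex.exp (θ * Complex.I))).re) (𝓝[>] 0)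
      (𝓝 ((F (1 / 2 : ℝ)).re - π ^ 4 / 360 - log 2 ^ 4 / 4)) := by
  have hexp : Tendsto (fun θ : ℝ ↦ Complex.exp (θ * Complex.I)) (𝓝[>] 0) (𝓝 1) := by
    have h : ContinuousAt (fun θ : ℝ ↦ Complex.exp (θ * Complex.I)) 0 := by fun_prop
    simpa [ContinuousAt] using h.tendsto.mono_left nhdsWithin_le_nhds
  have hreal : Tendsto (fun θ : ℝ ↦ ((1 - θ : ℝ) : ℂ)) (𝓝[>] 0) (𝓝 1) := by
    have h : ContinuousAt (fun θ : ℝ ↦ ((1 - θ : ℝ) : ℂ)) 0 := by fun_prop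
    simpa [ContinuousAt] using h.tendsto.mono_left nhdsWithin_le_nhds
  have hconvex : Convex ℝ (Metric.ball (⟨1 / 2, 1 / 2⟩ : ℂ) (√(1 / 2)) ∩
      Metric.ball (1 : ℂ) (1 / 2)) := (convex_ball _ _).inter (convex_ball _ _)
  have hdiff : Tendsto (fun θ : ℝ ↦ F (Complex.exp (θ * Complex.I)) - F (1 - θ : ℝ)) (𝓝[>] 0)
      (𝓝 0) := by
    have hbound : Tendsto (fun θ : ℝ ↦ 100 * ‖Complex.exp (θ * Complex.I) - (1 - θ : ℝ)‖)
        (𝓝[>] 0) (𝓝 0) := by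
      simpa using (hexp.sub hreal).norm.const_mul 100
    refine squeeze_zero_norm' ?_ hbound
    filter_upwards [Ioo_mem_nhdsGT (show (0 : ℝ) < 1 by norm_num),
      hexp.eventually (Metric.ball_mem_nhds (1 : ℂ) (show (0 : ℝ) < 1 / 2 by norm_num)),
      hreal.eventually (Metric.ball_mem_nhds (1 : ℂ) (show (0 : ℝ) < 1 / 2 by norm_num))]
      with θ hθ h₁ h₂
    refine hconvex.norm_image_sub_le_of_norm_hasDerivWithin_le
      (fun z hz ↦ (hF z (mem_ball_iff_sq_lt.1 hz.1)).hasDerivWithinAt)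
      (fun z hz ↦ norm_log_mul_log_one_sub_sq_div_le (mem_ball_iff_norm.1 hz.2).le)
      ⟨mem_ball_iff_sq_lt.2 ?_, h₂⟩
      ⟨mem_ball_iff_sq_lt.2 (exp_mul_I_sq_lt hθ.1 (by linarith [hθ.2, pi_gt_three])), h₁⟩
    simp only [Complex.ofReal_re, Complex.ofReal_im]
    nlinarith [hθ.1, hθ.2]
  have hsub : Tendsto (fun θ : ℝ ↦ 1 - θ) (𝓝[>] 0) (𝓝[<] 1) := by
    refine tendsto_nhdsWithin_iff.2 ⟨?_, ?_⟩
    · have h : ContinuousAt (fun x : ℝ ↦ 1 - x) 0 := by fun_prop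
      simpa [ContinuousAt] using h.tendsto.mono_left nhdsWithin_le_nhds
    · filter_upwards [self_mem_nhdsWithin] with x hx
      exact mem_Iio.2 (sub_lt_self 1 (mem_Ioi.1 hx))
  have hre := (Complex.continuous_re.tendsto 0).comp hdiff
  simpa [Function.comp_def] using hre.add ((tendsto_re_primitive_ofReal hF).comp hsub)

theorem intervalIntegrable_mul_log_two_mul_sin_sq :
    IntervalIntegrable (fun θ ↦ θ * log (2 * sin (θ / 2)) ^ 2) volume 0 (π / 3) := by
  rw [intervalIntegrable_iff_integrableOn_Ioc_of_le (by positivity)]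
  refine Measure.integrableOn_of_bounded (M := 2 * π) measure_Ioc_lt_top.ne
    (by fun_prop) ?_
  filter_upwards [ae_restrict_mem measurableSet_Ioc] with θ hθ
  have hlower : θ ≤ π / 2 * (2 * sin (θ / 2)) := by
    have h := mul_le_sin (x := θ / 2) (by linarith [hθ.1]) (by linarith [hθ.2, pi_pos])
    have := mul_le_mul_of_nonneg_left h pi_pos.le
    field_simp at this ⊢
    linarith
  have hupper : 2 * sin (θ / 2) ≤ 1 := by
    have h := sin_le_sin_of_le_of_le_pi_div_two (x := θ / 2) (y := π / 6)
      (by linarith [hθ.1, pi_pos]) (by linarith [pi_pos]) (by linarith [hθ.2])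
    rw [sin_pi_div_six] at h
    linarith
  have hpos : 0 < 2 * sin (θ / 2) := by
    have := sin_pos_of_pos_of_lt_pi (x := θ / 2) (by linarith [hθ.1])
      (by linarith [hθ.2, pi_pos])
    linarith
  have hθ₀ := hθ.1
  rw [Real.norm_eq_abs, abs_of_nonneg (by positivity)]
  calc θ * log (2 * sin (θ / 2)) ^ 2
      ≤ π / 2 * (2 * sin (θ / 2)) * log (2 * sin (θ / 2)) ^ 2 := by gcongr
    _ = π / 2 * (2 * sin (θ / 2) * log (2 * sin (θ / 2)) ^ 2) := by ring
    _ ≤ π / 2 * 4 := by gcongr; exact mul_log_sq_le hpos hupper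
    _ = 2 * π := by ring

end Primitive

theorem integral_mul_sub_pi_sq :
    ∫ θ in (0 : ℝ)..(π / 3), θ * (θ - π) ^ 2 / 4 = 11 / 1296 * π ^ 4 := by
  rw [intervalIntegral.integral_eq_sub_of_hasDerivAt
    (f := fun θ ↦ θ ^ 4 / 16 - π * θ ^ 3 / 6 + π ^ 2 * θ ^ 2 / 8)]
  · ring
  · intro θ _
    refine ((((hasDerivAt_pow 4 θ).div_const 16).sub
      (((hasDerivAt_pow 3 θ).const_mul π).div_const 6)).add
      (((hasDerivAt_pow 2 θ).const_mul (π ^ 2)).div_const 8)).congr_deriv ?_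
    norm_num
    ring
  · exact Continuous.intervalIntegrable (by fun_prop) _ _

theorem ls4_1_pi_over_3 :
    ∫ θ in (0:ℝ)..(π/3), θ * (Real.log (2 * Real.sin (θ/2)))^2 = 17/6480 * π^4 := by
  obtain ⟨F, hF⟩ := exists_isLogPrimitive
  have hpoly : IntervalIntegrable (fun θ : ℝ ↦ θ * (θ - π) ^ 2 / 4) volume 0 (π / 3) :=
    Continuous.intervalIntegrable (by fun_prop) _ _
  have hend : Tendsto (fun θ : ℝ ↦ (F (Complex.exp (θ * Complex.I))).re) (𝓝[<] (π / 3))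
      (𝓝 (F (Complex.exp ((π / 3 : ℝ) * Complex.I))).re) :=
    (hasDerivAt_re_primitive_exp hF
      ⟨by positivity, by linarith [pi_pos]⟩).continuousAt.tendsto.mono_left nhdsWithin_le_nhds
  have hFTC := intervalIntegral.integral_eq_sub_of_hasDerivAt_of_tendsto
    (show (0 : ℝ) < π / 3 by positivity)
    (fun θ hθ ↦ hasDerivAt_re_primitive_exp hF ⟨hθ.1, by linarith [hθ.2, pi_pos]⟩)
    (hpoly.sub intervalIntegrable_mul_log_two_mul_sin_sq) (tendsto_re_primitive_exp hF) hend
  rw [intervalIntegral.integral_sub hpoly intervalIntegrable_mul_log_two_mul_sin_sq,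
    integral_mul_sub_pi_sq] at hFTC
  linarith [re_primitive_exp_pi_div_three hF]
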